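/- Let ρ ≥ 0, let Λ ⊂ ℝ³ be a bounded open set, and let Ω ⊂ Λ be a Borel set of finite perimeter with |Ω| > 0 such that 𝓔_Λ[ρ,Ω] ≤ μ*|Ω|. Then |Ω| ≤ 8 + 16π ρ diam(Λ)³. -/

import Mathlib

open MeasureTheory Metric Set Filter Bornology
open scoped Topology ENNReal NNReal Pointwise

noncomputable section

/-- Three-dimensional Euclidean space. -/
abbrev E3 : Type := EuclideanSpace ℝ (Fin 3)

/-- The divergence of a vector field on `E3`, defined as the trace of its derivative. -/
def divg (φ : E3 → E3) (x : E3) : ℝ :=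
  LinearMap.trace ℝ E3 (fderiv ℝ φ x : E3 →ₗ[ℝ] E3)

/-- The candidate values `∫_Ω div φ` over `C¹` compactly supported vector fields bounded by one. -/
def perCand (Ω : Set E3) : Set ℝ :=
  {a : ℝ | ∃ φ : E3 → E3, ContDiff ℝ 1 φ ∧ HasCompactSupport φ ∧
      (∀ x, ‖φ x‖ ≤ 1) ∧ a = ∫ x in Ω, divg φ x}

/-- The perimeter of a set, in the sense of geometric measure theory. -/
def per (Ω : Set E3) : ℝ := sSup (perCand Ω)

/-- A set has finite perimeter if the family of integrals defining the perimeter is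
bounded above. -/
def HasFinPer (Ω : Set E3) : Prop := BddAbove (perCand Ω)

/-- The Lebesgue volume of a set as a real number. -/
def vol (Ω : Set E3) : ℝ := (volume Ω).toReal

/-- The liquid drop energy `𝓔_Λ[ρ,Ω]`. -/
def ldEnergy (Λ : Set E3) (ρ : ℝ) (Ω : Set E3) : ℝ :=
  per Ω + (1/2) * ∫ x, ∫ y,
    (Set.indicator Ω (fun _ => (1:ℝ)) x - ρ * Set.indicator Λ (fun _ => (1:ℝ)) x) *
      (Set.indicator Ω (fun _ => (1:ℝ)) y - ρ * Set.indicator Λ (fun _ => (1:ℝ)) y) / ‖x - y‖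

/-- The neutral ground state energy `E_Λ(ρ)`. -/
def EE (Λ : Set E3) (ρ : ℝ) : ℝ :=
  sInf {t : ℝ | ∃ Ω : Set E3, MeasurableSet Ω ∧ Ω ⊆ Λ ∧ HasFinPer Ω ∧
    vol Ω = ρ * vol Λ ∧ t = ldEnergy Λ ρ Ω}

/-- The liquid drop energy `I[Ω]` of an isolated droplet (no background). -/
def II (Ω : Set E3) : ℝ :=
  per Ω + (1/2) * ∫ x in Ω, ∫ y in Ω, 1 / ‖x - y‖

/-- `μ* = inf I[Ω]/|Ω|`. -/
def muStar : ℝ :=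
  sInf {t : ℝ | ∃ Ω : Set E3, MeasurableSet Ω ∧ HasFinPer Ω ∧
    0 < volume Ω ∧ volume Ω < ⊤ ∧ t = II Ω / vol Ω}

/-- A minimizer for the isolated liquid drop problem. -/
def IsMinimizer (Ω : Set E3) : Prop :=
  MeasurableSet Ω ∧ HasFinPer Ω ∧ 0 < volume Ω ∧ volume Ω < ⊤ ∧ II Ω = muStar * vol Ω

/-- The set of masses of minimizers. -/
def minimizerMasses : Set ℝ := {m : ℝ | ∃ Ω : Set E3, IsMinimizer Ω ∧ m = vol Ω}

/-- The largest mass of a minimizer. -/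
def mStar : ℝ := sSup minimizerMasses

/-- The smallest mass of a minimizer. -/
def mStarStar : ℝ := sInf minimizerMasses

/-- `Λ` is an `(r,L)`-Lipschitz open set: near each boundary point it is, in a suitable
orthonormal coordinate system, the epigraph of an `L`-Lipschitz function. -/
def IsLipschitzDomain (r L : ℝ) (Λ : Set E3) : Prop :=
  ∀ x ∈ frontier Λ, ∃ (g : E3 ≃ᵢ E3) (f : ℝ × ℝ → ℝ),
    LipschitzWith L.toNNReal f ∧
    Λ ∩ ball x r = {y ∈ ball x r | f (g y 0, g y 1) < g y 2}

/-- Fisher regularity of the boundary. -/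
def FisherCond (C ℓ : ℝ) (Λ : Set E3) : Prop :=
  ∀ h : ℝ, 0 < h → h ≤ ℓ → (volume (frontier Λ + ball (0:E3) h)).toReal ≤ C * ℓ^2 * h

/-- An admissible sequence of domains for the thermodynamic limit. -/
def IsAdmissibleSeq (r L C : ℝ) (Λs : ℕ → Set E3) (ℓ : ℕ → ℝ) : Prop :=
  Tendsto ℓ atTop atTop ∧
  ∀ n : ℕ, IsOpen (Λs n) ∧ IsBounded (Λs n) ∧ IsLipschitzDomain r L (Λs n) ∧
    ball 0 (ℓ n / C) ⊆ Λs n ∧ Λs n ⊆ ball 0 (ℓ n) ∧ FisherCond C (ℓ n) (Λs n)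

/-- `e` is the thermodynamic limit function of the liquid drop model. -/
def IsThermoLimit (e : ℝ → ℝ) : Prop :=
  ∀ ρ : ℝ, 0 ≤ ρ → ρ ≤ 1 →
    ∀ (r L C : ℝ) (Λs : ℕ → Set E3) (ℓ : ℕ → ℝ), 0 < r → 0 < L → 0 < C →
      IsAdmissibleSeq r L C Λs ℓ →
      Tendsto (fun n => EE (Λs n) ρ / vol (Λs n)) atTop (𝓝 (e ρ))

/-- The domain for the `N`-particle Jellium problem: `N^{1/3} Λ₁` with `Λ₁` the ball of
unit volume centered at the origin. -/
def jelDomain (N : ℕ) : Set E3 :=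
  ball (0:E3) ((N : ℝ) ^ ((1:ℝ)/3) * (3 / (4 * Real.pi)) ^ ((1:ℝ)/3))

/-- The `N`-particle Jellium ground state energy. -/
def jelN (N : ℕ) : ℝ :=
  sInf {t : ℝ | ∃ x : Fin N → E3, (∀ j, x j ∈ jelDomain N) ∧
    t = (∑ j : Fin N, ∑ k : Fin N, if j < k then 1 / ‖x j - x k‖ else 0)
      - (∑ j : Fin N, ∫ y in jelDomain N, 1 / ‖x j - y‖)
      + (1/2) * ∫ x' in jelDomain N, ∫ y in jelDomain N, 1 / ‖x' - y‖}

/-- `eJ` is the Jellium energy per particle in the thermodynamic limit. -/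
def IsJelliumLimit (eJ : ℝ) : Prop :=
  Tendsto (fun N : ℕ => jelN N / (N : ℝ)) atTop (𝓝 eJ)

/-- The grand-canonical liquid drop energy `F_Λ(ρ)`. -/
def FF (Λ : Set E3) (ρ : ℝ) : ℝ :=
  sInf {t : ℝ | ∃ Ω : Set E3, MeasurableSet Ω ∧ Ω ⊆ Λ ∧ HasFinPer Ω ∧
    t = ldEnergy Λ ρ Ω - muStar * vol Ω}

/-- A tetrahedron: the interior of the convex hull of four affinely independent points. -/
def IsTetra (Δ : Set E3) : Prop :=
  ∃ v : Fin 4 → E3, AffineIndependent ℝ v ∧ Δ = interior (convexHull ℝ (Set.range v))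

/-- The open cube `(-L/2, L/2)³`. -/
def cubeL (Lside : ℝ) : Set E3 := {x : E3 | ∀ i, |x i| < Lside / 2}

/-- The grand-canonical Jellium energy of point particles of charge `m` in the domain `S`
with a uniform background of density one. -/
def pointJellium (m : ℝ) (S : Set E3) : ℝ :=
  sInf {t : ℝ | ∃ (n : ℕ) (x : Fin n → E3), (∀ j, x j ∈ S) ∧
    t = (∑ j : Fin n, ∑ k : Fin n, if j < k then m^2 / ‖x j - x k‖ else 0)
      - m * (∑ j : Fin n, ∫ y in S, 1 / ‖x j - y‖)
      + (1/2) * ∫ x' in S, ∫ y in S, 1 / ‖x' - y‖}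

/-- The conclusions of the decomposition theorem for minimizing sequences. -/
def IsDecomp (Ω : ℕ → Set E3) (m : ℝ) (K : ℕ) (Ωs : Fin K → Set E3)
    (a : ℕ → Fin K → E3) (R : ℝ) (φ : ℕ → ℕ) : Prop :=
  StrictMono φ ∧ 0 < R ∧
  (∀ j k : Fin K, j ≠ k → Tendsto (fun n => ‖a n j - a n k‖) atTop atTop) ∧
  (∀ j, IsMinimizer (Ωs j)) ∧
  (∀ j, mStarStar ≤ vol (Ωs j) ∧ vol (Ωs j) ≤ mStar) ∧
  (∀ j, Tendsto
    (fun n => volume (symmDiff ({x : E3 | x + a n j ∈ Ω (φ n)} ∩ ball (0:E3) R) (Ωs j)))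
    atTop (𝓝 0)) ∧
  Tendsto (fun n => volume (Ω (φ n) \ ⋃ j, ball (a n j) R)) atTop (𝓝 0) ∧
  Tendsto (fun n => per (Ω (φ n) \ ⋃ j, ball (a n j) R)) atTop (𝓝 0) ∧
  m = ∑ j, vol (Ωs j) ∧
  (2 ≤ K → ∃ ε : ℕ → ℝ, Tendsto ε atTop (𝓝 0) ∧ ∀ n : ℕ,
    muStar * vol (Ω (φ n)) +
      (∑ j : Fin K, ∑ k : Fin K,
        if j < k then (vol (Ωs j) * vol (Ωs k) + ε n) / ‖a n j - a n k‖ else 0)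
      ≤ II (Ω (φ n)))

instance : MeasurableSpace (Matrix (Fin 3) (Fin 3) ℝ) :=
  (inferInstance : MeasurableSpace (Fin 3 → Fin 3 → ℝ))

/-- The rotation group SO(3), as a set of matrices. -/
def SO3 : Set (Matrix (Fin 3) (Fin 3) ℝ) := {R | R * R.transpose = 1 ∧ R.det = 1}

/-- The action of a matrix on Euclidean space. -/
def rot (R : Matrix (Fin 3) (Fin 3) ℝ) (x : E3) : E3 :=
  (EuclideanSpace.equiv (Fin 3) ℝ).symm (R.mulVec (EuclideanSpace.equiv (Fin 3) ℝ x))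

/-- The image of a set under the rigid motion `x ↦ Rx + τ`. -/
def rigidImage (R : Matrix (Fin 3) (Fin 3) ℝ) (τ : E3) (S : Set E3) : Set E3 :=
  (fun x => rot R x + τ) '' S

/-- `μ` is the normalized Haar measure of SO(3): a probability measure concentrated on SO(3)
which is invariant under left multiplication by rotations. -/
def IsHaarSO3 (μ : Measure (Matrix (Fin 3) (Fin 3) ℝ)) : Prop :=
  IsProbabilityMeasure μ ∧ μ SO3ᶜ = 0 ∧ ∀ S ∈ SO3, Measure.map (fun R => S * R) μ = μ

/-- The cube of the tiling of side length `ε` indexed by `z ∈ ℤ³`. -/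
def cubeZ (ε : ℝ) (z : Fin 3 → ℤ) : Set E3 := {x : E3 | ∀ i, |x i - ε * (z i : ℝ)| < ε / 2}

/-- The distance between two sets. -/
def setDist (s t : Set E3) : ℝ := sInf {d : ℝ | ∃ p ∈ s, ∃ q ∈ t, d = dist p q}

/-- The outer cubic boundary layer of `Λ` at scale `ε`. -/
def outerLayer (Λ : Set E3) (ε : ℝ) : Set E3 :=
  ⋃ z ∈ {z : Fin 3 → ℤ | setDist (cubeZ ε z) (frontier Λ) ≤ ε}, closure (cubeZ ε z \ Λ)

/-!
Cut `Ω` along a level set `{u = l}` of a function with `|∇u| ≤ L`. Two test fields, one for each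
piece, can be interpolated across the thin slab `{l < u < b}` into a single test field for `Ω`;
letting `b → l`, the perimeters of the pieces add up to at most `Per Ω + 2L · d/dl |Ω ∩ {u ≤ l}|`.
Each piece `A` satisfies `I[A] ≥ μ*|A|`, whereas by hypothesis `I[Ω]` exceeds `μ*|Ω|` by no more
than the attraction `ρ ∬_{Ω×Λ} |x - y|⁻¹ ≤ 2πρ diam(Λ)² |Ω|` of the background. Hence the Coulomb
interaction of the two pieces is at most `2L · d/dl |Ω ∩ {u ≤ l}| + 2πρ diam(Λ)² |Ω|`.

Integrating over all levels, which fill an interval of length at most `L diam(Λ)`, the layer cake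
formula gives `∬_{Ω×Ω} (u(x) - u(y))₊ / |x - y| ≤ L (2 + 2πρ diam(Λ)³) |Ω|`. Take the linear
functions `u = ⟨ν, ·⟩`, with `L = |ν|`, and integrate against the weight `exp(-|ν|²)`: the average
of `⟨ν, v⟩₊` is a multiple of `|v|`, so the singular kernel cancels and the left-hand side becomes
a multiple of `|Ω|²`.
-/

open scoped RealInnerProductSpace

/-! ### Perimeter of a set cut along a level set -/

theorem exists_continuous_density {a b κ : ℝ} (hab : a < b) (hκ : 1 < κ * (b - a)) :
    ∃ h : ℝ → ℝ, Continuous h ∧ (∀ t, h t ∈ Icc 0 κ) ∧ (∀ t ∉ Ioo a b, h t = 0) ∧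
      ∫ t in a..b, h t = 1 := by
  have hκ0 : 0 < κ := pos_of_mul_pos_left (one_pos.trans hκ) (sub_nonneg.2 hab.le)
  obtain ⟨δ, hδ, hδm⟩ : ∃ δ > 0, b - a - 2 * δ = κ⁻¹ :=
    ⟨(b - a - κ⁻¹) / 2, by linarith [(inv_lt_iff_one_lt_mul₀' hκ0).2 hκ], by ring⟩
  have hκ' : 0 < κ⁻¹ := inv_pos.2 hκ0
  have hdisj : Disjoint (Ioo a b)ᶜ (Icc (a + δ) (b - δ)) :=
    disjoint_compl_left_iff_subset.2 fun t ht => ⟨by linarith [ht.1], by linarith [ht.2]⟩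
  obtain ⟨g, hg0, hg1, hg⟩ :=
    exists_continuous_zero_one_of_isClosed isOpen_Ioo.isClosed_compl isClosed_Icc hdisj
  have hint : ∀ c d, IntervalIntegrable g volume c d := g.continuous.intervalIntegrable
  have hmass : κ⁻¹ ≤ ∫ t in a..b, g t := calc
    κ⁻¹ = ∫ _ in (a + δ)..(b - δ), (1 : ℝ) := by
      rw [intervalIntegral.integral_const, smul_eq_mul, ← hδm]; ring
    _ = ∫ t in (a + δ)..(b - δ), g t :=
      intervalIntegral.integral_congr fun t ht => by
        rw [uIcc_of_le (by linarith)] at ht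
        exact (hg1 ht).symm
    _ ≤ ∫ t in a..b, g t :=
      intervalIntegral.integral_mono_interval (by linarith) (by linarith) (by linarith)
        (.of_forall fun t => (hg t).1) (hint a b)
  set m := ∫ t in a..b, g t
  have hm : 0 < m := hκ'.trans_le hmass
  refine ⟨fun t => g t / m, by fun_prop, fun t => ⟨div_nonneg (hg t).1 hm.le, ?_⟩,
    fun t ht => by simp [hg0 ht], by rw [intervalIntegral.integral_div, div_self hm.ne']⟩
  calc g t / m ≤ 1 / κ⁻¹ := div_le_div₀ zero_le_one (hg t).2 hκ' hmass
    _ = κ := by simp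

theorem exists_contDiff_step {a b κ : ℝ} (hab : a < b) (hκ : 1 < κ * (b - a)) :
    ∃ η : ℝ → ℝ, ContDiff ℝ 1 η ∧ (∀ t, η t ∈ Icc 0 1) ∧ (∀ t ≤ a, η t = 0) ∧
      (∀ t ≥ b, η t = 1) ∧ (∀ t, deriv η t ∈ Icc 0 κ) ∧ ∀ t ∉ Ioo a b, deriv η t = 0 := by
  obtain ⟨h, hcont, hmem, hzero, hmass⟩ := exists_continuous_density hab hκ
  set η : ℝ → ℝ := fun t => ∫ s in a..t, h s
  have hderiv : deriv η = h := funext fun t => hcont.deriv_integral h a t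
  have hdiff : Differentiable ℝ η := fun t =>
    (hcont.integral_hasStrictDerivAt a t).hasDerivAt.differentiableAt
  have hmono : Monotone η := monotone_of_deriv_nonneg hdiff fun t => by
    rw [hderiv]; exact (hmem t).1
  have hleft : ∀ t ≤ a, η t = 0 := fun t ht =>
    (intervalIntegral.integral_congr fun s hs => by
      rw [uIcc_of_ge ht] at hs
      exact hzero s fun hs' => hs.2.not_gt hs'.1).trans intervalIntegral.integral_zero
  have hright : ∀ t ≥ b, η t = 1 := fun t ht => calc
    η t = (∫ s in a..b, h s) + ∫ s in b..t, h s :=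
      (intervalIntegral.integral_add_adjacent_intervals (hcont.intervalIntegrable _ _)
        (hcont.intervalIntegrable _ _)).symm
    _ = 1 + ∫ _ in b..t, 0 := by
      rw [hmass, intervalIntegral.integral_congr fun s hs => ?_]
      rw [uIcc_of_le ht] at hs
      exact hzero s fun hs' => hs.1.not_gt hs'.2
    _ = 1 := by simp
  refine ⟨η, contDiff_one_iff_deriv.2 ⟨hdiff, hderiv ▸ hcont⟩, fun t => ⟨?_, ?_⟩, hleft, hright,
    hderiv ▸ hmem, hderiv ▸ hzero⟩
  · exact (hleft _ (min_le_right t a)).symm.trans_le (hmono (min_le_left t a))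
  · exact (hmono (le_max_left t b)).trans_eq (hright _ (le_max_right t b))

theorem divg_add {φ ψ : E3 → E3} {x : E3} (hφ : DifferentiableAt ℝ φ x)
    (hψ : DifferentiableAt ℝ ψ x) : divg (φ + ψ) x = divg φ x + divg ψ x := by
  simp [divg, fderiv_add hφ hψ]

theorem divg_smul {w : E3 → ℝ} {φ : E3 → E3} {x : E3} (hw : DifferentiableAt ℝ w x)
    (hφ : DifferentiableAt ℝ φ x) :
    divg (w • φ) x = w x * divg φ x + fderiv ℝ w x (φ x) := by
  simp [divg, fderiv_smul hw hφ]

theorem continuous_divg {φ : E3 → E3} (hφ : ContDiff ℝ 1 φ) : Continuous (divg φ) :=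
  (((LinearMap.trace ℝ E3).comp (ContinuousLinearMap.coeLM ℝ)).continuous_of_finiteDimensional :
    Continuous fun T : E3 →L[ℝ] E3 => LinearMap.trace ℝ E3 (T : E3 →ₗ[ℝ] E3)).comp
    (hφ.continuous_fderiv one_ne_zero)

theorem hasCompactSupport_divg {φ : E3 → E3} (hφ : HasCompactSupport φ) :
    HasCompactSupport (divg φ) :=
  (hφ.fderiv (𝕜 := ℝ)).comp_left
    (g := fun T : E3 →L[ℝ] E3 => LinearMap.trace ℝ E3 (T : E3 →ₗ[ℝ] E3)) (by simp)

/-- The `C¹` compactly supported vector fields of norm at most one, against which the perimeter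
is tested. -/
structure IsTestField (φ : E3 → E3) : Prop where
  contDiff : ContDiff ℝ 1 φ
  hasCompactSupport : HasCompactSupport φ
  norm_le_one : ∀ x, ‖φ x‖ ≤ 1

namespace IsTestField

variable {φ ψ : E3 → E3}

theorem zero : IsTestField 0 :=
  ⟨contDiff_const, .zero, by simp⟩

theorem differentiable (hφ : IsTestField φ) : Differentiable ℝ φ :=
  hφ.contDiff.differentiable one_ne_zero

theorem integrable_divg (hφ : IsTestField φ) : Integrable (divg φ) :=
  (continuous_divg hφ.contDiff).integrable_of_hasCompactSupport
    (hasCompactSupport_divg hφ.hasCompactSupport)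

theorem exists_abs_divg_le (hφ : IsTestField φ) : ∃ C, ∀ x, |divg φ x| ≤ C :=
  (continuous_divg hφ.contDiff).bounded_above_of_compact_support
    (hasCompactSupport_divg hφ.hasCompactSupport)

theorem setIntegral_divg_mem_perCand (hφ : IsTestField φ) (Ω : Set E3) :
    ∫ x in Ω, divg φ x ∈ perCand Ω :=
  ⟨φ, hφ.contDiff, hφ.hasCompactSupport, hφ.norm_le_one, rfl⟩

theorem smul_add_one_sub_smul (hφ : IsTestField φ) (hψ : IsTestField ψ) {w : E3 → ℝ}
    (hw : ContDiff ℝ 1 w) (hw01 : ∀ x, w x ∈ Icc 0 1) :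
    IsTestField (w • φ + (1 - w) • ψ) where
  contDiff := (hw.smul hφ.contDiff).add ((contDiff_const.sub hw).smul hψ.contDiff)
  hasCompactSupport := hφ.hasCompactSupport.smul_left.add hψ.hasCompactSupport.smul_left
  norm_le_one x := mem_closedBall_zero_iff.1 <|
    convex_closedBall (0 : E3) 1 (mem_closedBall_zero_iff.2 (hφ.norm_le_one x))
      (mem_closedBall_zero_iff.2 (hψ.norm_le_one x)) (hw01 x).1 (sub_nonneg.2 (hw01 x).2)
      (add_sub_cancel _ _)

theorem divg_smul_add_one_sub_smul (hφ : IsTestField φ) (hψ : IsTestField ψ) {w : E3 → ℝ}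
    {x : E3} (hw : DifferentiableAt ℝ w x) :
    divg (w • φ + (1 - w) • ψ) x =
      w x * divg φ x + (1 - w x) * divg ψ x + fderiv ℝ w x (φ x - ψ x) := by
  have hw' : DifferentiableAt ℝ (1 - w) x := (differentiableAt_const 1).sub hw
  have hderiv : fderiv ℝ (1 - w) x = -fderiv ℝ w x := fderiv_const_sub 1
  rw [divg_add (hw.smul (hφ.differentiable x)) (hw'.smul (hψ.differentiable x)),
    divg_smul hw (hφ.differentiable x), divg_smul hw' (hψ.differentiable x), hderiv, map_sub]
  simp only [Pi.sub_apply, Pi.one_apply, neg_apply]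
  ring

end IsTestField

theorem mem_perCand {Ω : Set E3} {a : ℝ} :
    a ∈ perCand Ω ↔ ∃ φ, IsTestField φ ∧ a = ∫ x in Ω, divg φ x :=
  ⟨fun ⟨φ, h₁, h₂, h₃, ha⟩ => ⟨φ, ⟨h₁, h₂, h₃⟩, ha⟩,
    fun ⟨_, hφ, ha⟩ => ha ▸ hφ.setIntegral_divg_mem_perCand Ω⟩

theorem zero_mem_perCand (Ω : Set E3) : 0 ∈ perCand Ω :=
  mem_perCand.2 ⟨0, .zero, by simp [divg]⟩

theorem per_nonneg (Ω : Set E3) : 0 ≤ per Ω :=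
  Real.sSup_nonneg' ⟨0, zero_mem_perCand Ω, le_rfl⟩

section LevelSetCut

variable {Ω : Set E3} {u : E3 → ℝ} {L l : ℝ} {φ ψ : E3 → E3}

theorem IsTestField.divg_comp_smul_add (hφ : IsTestField φ) (hψ : IsTestField ψ)
    (hu : Differentiable ℝ u) {η : ℝ → ℝ} (hη : Differentiable ℝ η) (x : E3) :
    divg ((η ∘ u) • φ + (1 - η ∘ u) • ψ) x =
      η (u x) * divg φ x + (1 - η (u x)) * divg ψ x +
        deriv η (u x) * fderiv ℝ u x (φ x - ψ x) := by
  have hchain : fderiv ℝ (η ∘ u) x = deriv η (u x) • fderiv ℝ u x :=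
    ((hη (u x)).hasDerivAt.comp_hasFDerivAt x (hu x).hasFDerivAt).fderiv
  rw [hφ.divg_smul_add_one_sub_smul hψ ((hη (u x)).comp x (hu x)), hchain]
  rfl

theorem IsTestField.abs_mul_fderiv_sub_le (hφ : IsTestField φ) (hψ : IsTestField ψ)
    (hL : ∀ x, ‖fderiv ℝ u x‖ ≤ L) {s κ : ℝ} (hs : s ∈ Icc 0 κ) (x : E3) :
    |s * fderiv ℝ u x (φ x - ψ x)| ≤ 2 * L * κ := calc
  |s * fderiv ℝ u x (φ x - ψ x)| = s * |fderiv ℝ u x (φ x - ψ x)| := by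
    rw [abs_mul, abs_of_nonneg hs.1]
  _ ≤ κ * (L * 2) := by
    gcongr
    · exact hs.1.trans hs.2
    · exact hs.2
    · refine ((fderiv ℝ u x).le_of_opNorm_le (hL x) _).trans ?_
      gcongr
      · exact (norm_nonneg _).trans (hL x)
      · linarith [norm_sub_le (φ x) (ψ x), hφ.norm_le_one x, hψ.norm_le_one x]
  _ = 2 * L * κ := by ring

theorem IsTestField.exists_glue (hφ : IsTestField φ) (hψ : IsTestField ψ)
    (hu : ContDiff ℝ 1 u) (hL : ∀ x, ‖fderiv ℝ u x‖ ≤ L) {C : ℝ} (hC₀ : 0 ≤ C)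
    (hC : ∀ x, divg φ x - divg ψ x ≤ C) {b κ : ℝ} (hb : l < b) (hκ : 1 < κ * (b - l)) :
    ∃ X, IsTestField X ∧ (∀ x, u x ≤ l → divg ψ x = divg X x) ∧
      ∀ x, divg φ x ≤ divg X x + (u ⁻¹' Iic b).indicator (fun _ => 2 * L * κ + C) x := by
  obtain ⟨η, hη, hη01, hηl, hηb, hηκ, hη'⟩ := exists_contDiff_step hb hκ
  have hdivg := hφ.divg_comp_smul_add hψ (hu.differentiable one_ne_zero)
    (hη.differentiable one_ne_zero)
  refine ⟨(η ∘ u) • φ + (1 - η ∘ u) • ψ,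
    hφ.smul_add_one_sub_smul hψ (hη.comp hu) fun x => hη01 (u x), fun x hx => ?_, fun x => ?_⟩
  · rw [hdivg, hηl _ hx, hη' _ fun h => h.1.not_ge hx]
    ring
  rw [hdivg]
  by_cases hxb : u x ≤ b
  · rw [indicator_of_mem (by exact hxb)]
    have hgrad := (abs_le.1 (hφ.abs_mul_fderiv_sub_le hψ hL (hηκ (u x)) x)).1
    have hdiff : (1 - η (u x)) * (divg φ x - divg ψ x) ≤ C :=
      (mul_le_mul_of_nonneg_left (hC x) (sub_nonneg.2 (hη01 (u x)).2)).trans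
        (mul_le_of_le_one_left hC₀ (sub_le_self _ (hη01 (u x)).1))
    linarith
  · rw [indicator_of_notMem (by exact hxb), hηb _ (not_le.1 hxb).le, hη' _ fun h => hxb h.2.le]
    exact le_of_eq (by ring)

theorem IsTestField.setIntegral_add_setIntegral_le (hφ : IsTestField φ) (hψ : IsTestField ψ)
    (hΩ : MeasurableSet Ω) (hΩfin : volume Ω ≠ ∞) (hper : HasFinPer Ω) (hu : ContDiff ℝ 1 u)
    (hL : ∀ x, ‖fderiv ℝ u x‖ ≤ L) {C : ℝ} (hC₀ : 0 ≤ C) (hC : ∀ x, divg φ x - divg ψ x ≤ C)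
    {b κ : ℝ} (hb : l < b) (hκ : 1 < κ * (b - l)) :
    (∫ x in Ω ∩ u ⁻¹' Ioi l, divg φ x) + ∫ x in Ω ∩ u ⁻¹' Iic l, divg ψ x ≤
      per Ω + (2 * L * κ + C) * vol (Ω ∩ u ⁻¹' Ioc l b) := by
  obtain ⟨X, hX, hlow, hhigh⟩ := hφ.exists_glue hψ hu hL hC₀ hC hb hκ
  have hmeas : ∀ {s : Set ℝ}, MeasurableSet s → MeasurableSet (u ⁻¹' s) :=
    fun hs => hu.continuous.measurable hs
  have : IsFiniteMeasure (volume.restrict (Ω ∩ u ⁻¹' Ioi l)) :=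
    ⟨by simpa using (measure_mono inter_subset_left).trans_lt hΩfin.lt_top⟩
  have hind : Integrable ((u ⁻¹' Iic b).indicator fun _ => 2 * L * κ + C)
      (volume.restrict (Ω ∩ u ⁻¹' Ioi l)) :=
    (integrable_const _).indicator (hmeas measurableSet_Iic)
  have hslab : Ω ∩ u ⁻¹' Ioi l ∩ u ⁻¹' Iic b = Ω ∩ u ⁻¹' Ioc l b := inter_assoc _ _ _
  have hsplit : (∫ x in Ω ∩ u ⁻¹' Ioi l, divg X x) + ∫ x in Ω ∩ u ⁻¹' Iic l, divg X x =
      ∫ x in Ω, divg X x := by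
    rw [← compl_Ioi, preimage_compl, ← sdiff_eq]
    exact integral_inter_add_sdiff (hmeas measurableSet_Ioi) hX.integrable_divg.integrableOn
  calc (∫ x in Ω ∩ u ⁻¹' Ioi l, divg φ x) + ∫ x in Ω ∩ u ⁻¹' Iic l, divg ψ x
      ≤ (∫ x in Ω ∩ u ⁻¹' Ioi l,
            (divg X x + (u ⁻¹' Iic b).indicator (fun _ => 2 * L * κ + C) x)) +
          ∫ x in Ω ∩ u ⁻¹' Iic l, divg X x :=
        add_le_add
          (integral_mono hφ.integrable_divg.integrableOn
            (hX.integrable_divg.integrableOn.add hind) hhigh)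
          (setIntegral_congr_fun (hΩ.inter (hmeas measurableSet_Iic)) fun x hx => hlow x hx.2).le
    _ = (∫ x in Ω, divg X x) + (2 * L * κ + C) * vol (Ω ∩ u ⁻¹' Ioc l b) := by
        rw [integral_add hX.integrable_divg.integrableOn hind,
          setIntegral_indicator (hmeas measurableSet_Iic), setIntegral_const, hslab, smul_eq_mul,
          ← hsplit, vol, Measure.real]
        ring
    _ ≤ per Ω + (2 * L * κ + C) * vol (Ω ∩ u ⁻¹' Ioc l b) := by
        gcongr
        exact le_csSup hper (hX.setIntegral_divg_mem_perCand Ω)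

theorem IsTestField.setIntegral_add_setIntegral_le_of_hasDerivWithinAt (hφ : IsTestField φ)
    (hψ : IsTestField ψ) (hΩ : MeasurableSet Ω) (hΩfin : volume Ω ≠ ∞) (hper : HasFinPer Ω)
    (hu : ContDiff ℝ 1 u) (hL : ∀ x, ‖fderiv ℝ u x‖ ≤ L) {c : ℝ}
    (hc : HasDerivWithinAt (fun t => vol (Ω ∩ u ⁻¹' Iic t)) c (Ioi l) l) :
    (∫ x in Ω ∩ u ⁻¹' Ioi l, divg φ x) + ∫ x in Ω ∩ u ⁻¹' Iic l, divg ψ x ≤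
      per Ω + 2 * L * c := by
  set f : ℝ → ℝ := fun t => vol (Ω ∩ u ⁻¹' Iic t)
  obtain ⟨C₁, hC₁⟩ := hφ.exists_abs_divg_le
  obtain ⟨C₂, hC₂⟩ := hψ.exists_abs_divg_le
  have hC : ∀ x, divg φ x - divg ψ x ≤ C₁ + C₂ := fun x => by
    linarith [(abs_le.1 (hC₁ x)).2, (abs_le.1 (hC₂ x)).1]
  have hC₀ : 0 ≤ C₁ + C₂ :=
    add_nonneg ((abs_nonneg _).trans (hC₁ 0)) ((abs_nonneg _).trans (hC₂ 0))
  have hslab : ∀ b > l, vol (Ω ∩ u ⁻¹' Ioc l b) = f b - f l := fun b hb => by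
    rw [← Iic_sdiff_Iic, preimage_sdiff, inter_sdiff_distrib_left]
    exact measureReal_sdiff (by gcongr)
      (hΩ.inter (hu.continuous.measurable measurableSet_Iic))
      (measure_ne_top_of_subset inter_subset_left hΩfin)
  have hbound : ∀ b > l, (∫ x in Ω ∩ u ⁻¹' Ioi l, divg φ x) + ∫ x in Ω ∩ u ⁻¹' Iic l, divg ψ x ≤
      per Ω + (2 * L * slope f l b + (2 * L + (C₁ + C₂)) * (f b - f l)) := fun b hb => by
    have hbl : 0 < b - l := sub_pos.2 hb
    refine (hφ.setIntegral_add_setIntegral_le hψ hΩ hΩfin hper hu hL hC₀ hC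
      (κ := (b - l)⁻¹ + 1) hb ?_).trans_eq ?_
    · rw [add_mul, inv_mul_cancel₀ hbl.ne']
      linarith
    · rw [hslab b hb, slope_def_field]
      ring
  have hslope : Tendsto (slope f l) (𝓝[>] l) (𝓝 c) :=
    (hasDerivWithinAt_iff_tendsto_slope' self_notMem_Ioi).1 hc
  have hcont : Tendsto (fun b => f b - f l) (𝓝[>] l) (𝓝 0) := by
    simpa using hc.continuousWithinAt.tendsto.sub_const (f l)
  refine ge_of_tendsto (x := 𝓝[>] l) ?_ (eventually_mem_nhdsWithin.mono hbound)
  simpa using ((hslope.const_mul (2 * L)).add (hcont.const_mul _)).const_add (per Ω)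

theorem per_add_per_le_of_forall_add_le {A B : Set E3} {M : ℝ}
    (h : ∀ φ ψ, IsTestField φ → IsTestField ψ →
      (∫ x in A, divg φ x) + ∫ x in B, divg ψ x ≤ M) :
    HasFinPer A ∧ HasFinPer B ∧ per A + per B ≤ M := by
  have key : ∀ a ∈ perCand A, ∀ b ∈ perCand B, a + b ≤ M := fun a ha b hb => by
    obtain ⟨φ, hφ, rfl⟩ := mem_perCand.1 ha
    obtain ⟨ψ, hψ, rfl⟩ := mem_perCand.1 hb
    exact h φ ψ hφ hψ
  have hA : per A ≤ M - per B := csSup_le ⟨0, zero_mem_perCand A⟩ fun a ha =>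
    le_sub_comm.1 <| csSup_le ⟨0, zero_mem_perCand B⟩ fun b hb => by linarith [key a ha b hb]
  exact ⟨⟨M, fun a ha => by simpa using key a ha 0 (zero_mem_perCand B)⟩,
    ⟨M, fun b hb => by simpa using key 0 (zero_mem_perCand A) b hb⟩, by linarith⟩

theorem HasFinPer.cut_levelSet (hper : HasFinPer Ω) (hΩ : MeasurableSet Ω)
    (hΩfin : volume Ω ≠ ∞) (hu : ContDiff ℝ 1 u) (hL : ∀ x, ‖fderiv ℝ u x‖ ≤ L) {c : ℝ}
    (hc : HasDerivWithinAt (fun t => vol (Ω ∩ u ⁻¹' Iic t)) c (Ioi l) l) :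
    HasFinPer (Ω ∩ u ⁻¹' Ioi l) ∧ HasFinPer (Ω ∩ u ⁻¹' Iic l) ∧
      per (Ω ∩ u ⁻¹' Ioi l) + per (Ω ∩ u ⁻¹' Iic l) ≤ per Ω + 2 * L * c :=
  per_add_per_le_of_forall_add_le fun _ _ hφ hψ =>
    hφ.setIntegral_add_setIntegral_le_of_hasDerivWithinAt hψ hΩ hΩfin hper hu hL hc

end LevelSetCut

/-! ### Coulomb energy -/

theorem lintegral_ofReal_fun_norm_addHaar {E : Type*} [NormedAddCommGroup E] [NormedSpace ℝ E]
    [FiniteDimensional ℝ E] [Nontrivial E] [MeasurableSpace E] [BorelSpace E] (μ : Measure E)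
    [μ.IsAddHaarMeasure] {f : ℝ → ℝ} (hf₀ : ∀ r, 0 ≤ r → 0 ≤ f r)
    (hf : IntegrableOn (fun r => r ^ (Module.finrank ℝ E - 1) * f r) (Ioi 0)) :
    ∫⁻ x, ENNReal.ofReal (f ‖x‖) ∂μ = ENNReal.ofReal (Module.finrank ℝ E * μ.real (ball 0 1) *
      ∫ r in Ioi 0, r ^ (Module.finrank ℝ E - 1) * f r) := by
  rw [← ofReal_integral_eq_lintegral_ofReal ((integrable_fun_norm_addHaar μ).2 hf)
    (.of_forall fun x => hf₀ _ (norm_nonneg x)), integral_fun_norm_addHaar]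
  simp only [nsmul_eq_mul, smul_eq_mul, mul_assoc]

theorem E3.lintegral_ofReal_fun_norm {f : ℝ → ℝ} (hf₀ : ∀ r, 0 ≤ r → 0 ≤ f r)
    (hf : IntegrableOn (fun r => r ^ 2 * f r) (Ioi 0)) :
    ∫⁻ x : E3, ENNReal.ofReal (f ‖x‖) =
      ENNReal.ofReal (4 * Real.pi * ∫ r in Ioi 0, r ^ 2 * f r) := by
  have hdim : Module.finrank ℝ E3 = 3 := finrank_euclideanSpace_fin
  have hball : volume.real (ball (0 : E3) 1) = Real.pi * 4 / 3 := by
    rw [Measure.real, EuclideanSpace.volume_ball_fin_three, ENNReal.ofReal_one, one_pow, one_mul,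
      ENNReal.toReal_ofReal (by positivity)]
  have h := lintegral_ofReal_fun_norm_addHaar (volume : Measure E3) hf₀ (by rwa [hdim])
  rw [h, hdim, hball]
  congr 2
  push_cast
  ring

theorem E3.lintegral_closedBall_one_div_norm {d : ℝ} (hd : 0 ≤ d) :
    ∫⁻ x in closedBall (0 : E3) d, ENNReal.ofReal (1 / ‖x‖) =
      ENNReal.ofReal (2 * Real.pi * d ^ 2) := by
  have hweight : ∀ r ∈ Ioi (0 : ℝ), r ^ 2 * (Iic d).indicator (fun r => 1 / r) r =
      (Iic d).indicator (fun r => r) r := fun r hr => by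
    by_cases hrd : r ≤ d
    · simp only [indicator, mem_Iic, hrd, if_true]
      field_simp [(mem_Ioi.1 hr).ne']
    · simp [indicator, hrd]
  calc ∫⁻ x in closedBall (0 : E3) d, ENNReal.ofReal (1 / ‖x‖)
      = ∫⁻ x : E3, ENNReal.ofReal ((Iic d).indicator (fun r => 1 / r) ‖x‖) := by
        rw [← lintegral_indicator measurableSet_closedBall]
        congr with x
        by_cases hx : ‖x‖ ≤ d <;> simp [indicator, hx]
    _ = ENNReal.ofReal (4 * Real.pi * ∫ r in Ioi 0, (Iic d).indicator (fun r => r) r) := by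
        rw [E3.lintegral_ofReal_fun_norm, setIntegral_congr_fun measurableSet_Ioi hweight]
        · exact fun r hr => indicator_apply_nonneg fun _ => one_div_nonneg.2 hr
        · rw [integrableOn_congr_fun hweight measurableSet_Ioi, IntegrableOn,
            integrable_indicator_iff measurableSet_Iic, IntegrableOn,
            Measure.restrict_restrict measurableSet_Iic, Iic_inter_Ioi]
          exact continuous_id.integrableOn_Ioc
    _ = ENNReal.ofReal (2 * Real.pi * d ^ 2) := by
        rw [setIntegral_indicator measurableSet_Iic, Ioi_inter_Iic,
          ← intervalIntegral.integral_of_le hd, integral_id]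
        ring_nf

theorem E3.lintegral_norm_mul_exp_neg_norm_sq :
    ∫⁻ x : E3, ENNReal.ofReal (‖x‖ * Real.exp (-‖x‖ ^ 2)) = ENNReal.ofReal (2 * Real.pi) := by
  have hweight : ∀ r ∈ Ioi (0 : ℝ), r ^ 2 * (r * Real.exp (-r ^ 2)) =
      r ^ (3 : ℝ) * Real.exp (-r ^ (2 : ℝ)) := fun r _ => by
    norm_cast
    ring
  have hval : ∫ r in Ioi (0 : ℝ), r ^ 2 * (r * Real.exp (-r ^ 2)) = 1 / 2 := by
    rw [setIntegral_congr_fun measurableSet_Ioi hweight,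
      integral_rpow_mul_exp_neg_rpow two_pos (by norm_num)]
    norm_num [Real.Gamma_two]
  have hint : IntegrableOn (fun r : ℝ => r ^ 2 * (r * Real.exp (-r ^ 2))) (Ioi 0) :=
    .of_integral_ne_zero (by simp [hval])
  rw [E3.lintegral_ofReal_fun_norm (fun r hr => by positivity) hint, hval]
  ring_nf

theorem setLIntegral_one_div_norm_sub_le {S : Set E3} {x : E3} {d : ℝ} (hd : 0 ≤ d)
    (hS : S ⊆ closedBall x d) :
    ∫⁻ y in S, ENNReal.ofReal (1 / ‖x - y‖) ≤ ENNReal.ofReal (2 * Real.pi * d ^ 2) := calc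
  ∫⁻ y in S, ENNReal.ofReal (1 / ‖x - y‖)
    ≤ ∫⁻ y in closedBall x d, ENNReal.ofReal (1 / ‖x - y‖) := lintegral_mono_set hS
  _ = ∫⁻ y in closedBall (0 : E3) d, ENNReal.ofReal (1 / ‖y‖) := by
    rw [← lintegral_indicator measurableSet_closedBall,
      ← lintegral_indicator measurableSet_closedBall, ← lintegral_sub_left_eq_self _ x]
    simp [indicator, dist_eq_norm]
  _ = ENNReal.ofReal (2 * Real.pi * d ^ 2) := E3.lintegral_closedBall_one_div_norm hd

theorem setLIntegral_prod_one_div_norm_sub_le {A B : Set E3} {d : ℝ} (hd : 0 ≤ d)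
    (h : ∀ x ∈ A, B ⊆ closedBall x d) :
    ∫⁻ p in A ×ˢ B, ENNReal.ofReal (1 / ‖p.1 - p.2‖) ≤
      ENNReal.ofReal (2 * Real.pi * d ^ 2) * volume A := by
  rw [Measure.volume_eq_prod, ← Measure.prod_restrict, lintegral_prod _ (by fun_prop),
    ← setLIntegral_const]
  exact setLIntegral_mono measurable_const fun x hx => setLIntegral_one_div_norm_sub_le hd (h x hx)

theorem integrableOn_one_div_norm_sub {A B : Set E3} (hA : IsBounded A) (hB : IsBounded B) :
    IntegrableOn (fun p : E3 × E3 => 1 / ‖p.1 - p.2‖) (A ×ˢ B) := by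
  refine ⟨Measurable.aestronglyMeasurable (by fun_prop),
    (hasFiniteIntegral_iff_ofReal (.of_forall fun p => by positivity)).2 ?_⟩
  refine (setLIntegral_prod_one_div_norm_sub_le diam_nonneg fun x hx y hy =>
    dist_le_diam_of_mem (hA.union hB) (.inr hy) (.inl hx)).trans_lt ?_
  exact ENNReal.mul_lt_top ENNReal.ofReal_lt_top hA.measure_lt_top

/-- The Coulomb energy `∬ f(x) g(y) / |x - y|` of a pair of charge densities. -/
def coulomb (f g : E3 → ℝ) : ℝ :=
  ∫ p : E3 × E3, f p.1 * g p.2 / ‖p.1 - p.2‖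

/-- The bounded measurable charge densities with bounded support; on these the Coulomb energy
converges absolutely. -/
structure IsBoundedCharge (f : E3 → ℝ) : Prop where
  measurable : Measurable f
  isBounded_support : IsBounded (Function.support f)
  exists_abs_le : ∃ C, ∀ x, |f x| ≤ C

namespace IsBoundedCharge

variable {f g : E3 → ℝ}

theorem indicator_one {A : Set E3} (hA : MeasurableSet A) (hAb : IsBounded A) :
    IsBoundedCharge (A.indicator 1) where
  measurable := measurable_one.indicator hA
  isBounded_support := hAb.subset support_indicator_subset
  exists_abs_le := ⟨1, fun x => by by_cases hx : x ∈ A <;> simp [hx]⟩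

theorem add_const_smul (hf : IsBoundedCharge f) (hg : IsBoundedCharge g) (c : ℝ) :
    IsBoundedCharge (f + c • g) where
  measurable := hf.measurable.add (hg.measurable.const_smul c)
  isBounded_support := (hf.isBounded_support.union
    (hg.isBounded_support.subset (Function.support_const_smul_subset c g))).subset
      (Function.support_add f (c • g))
  exists_abs_le := by
    obtain ⟨C, hC⟩ := hf.exists_abs_le
    obtain ⟨D, hD⟩ := hg.exists_abs_le
    refine ⟨C + |c| * D, fun x => (abs_add_le _ _).trans (add_le_add (hC x) ?_)⟩
    rw [Pi.smul_apply, smul_eq_mul, abs_mul]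
    gcongr
    exact hD x

theorem integrable_coulomb (hf : IsBoundedCharge f) (hg : IsBoundedCharge g) :
    Integrable fun p : E3 × E3 => f p.1 * g p.2 / ‖p.1 - p.2‖ := by
  obtain ⟨C, hC⟩ := hf.exists_abs_le
  obtain ⟨D, hD⟩ := hg.exists_abs_le
  have hC₀ : 0 ≤ C := (abs_nonneg _).trans (hC 0)
  have hsupp := (measurableSet_support hf.measurable).prod (measurableSet_support hg.measurable)
  refine (((integrable_indicator_iff hsupp).2 (integrableOn_one_div_norm_sub
    hf.isBounded_support hg.isBounded_support)).const_mul (C * D)).mono' ?_ (.of_forall fun p => ?_)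
  · have := hf.measurable
    have := hg.measurable
    exact Measurable.aestronglyMeasurable (by fun_prop)
  · by_cases hp : p ∈ Function.support f ×ˢ Function.support g
    · rw [indicator_of_mem hp, norm_div, norm_mul, norm_norm, div_eq_mul_one_div]
      gcongr
      exacts [hC p.1, hD p.2]
    · rw [indicator_of_notMem hp]
      rw [mem_prod, not_and_or, Function.notMem_support, Function.notMem_support] at hp
      rcases hp with hp | hp <;> simp [hp]

theorem coulomb_eq_integral_integral (hf : IsBoundedCharge f) (hg : IsBoundedCharge g) :
    coulomb f g = ∫ x, ∫ y, f x * g y / ‖x - y‖ :=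
  integral_prod _ (hf.integrable_coulomb hg)

end IsBoundedCharge

theorem coulomb_comm (f g : E3 → ℝ) : coulomb f g = coulomb g f := by
  rw [coulomb, Measure.volume_eq_prod, ← integral_prod_swap]
  congr with p
  rw [mul_comm, norm_sub_rev]
  rfl

theorem coulomb_add_const_smul_self {f g : E3 → ℝ} (hf : IsBoundedCharge f)
    (hg : IsBoundedCharge g) (c : ℝ) :
    coulomb (f + c • g) (f + c • g) =
      coulomb f f + 2 * c * coulomb f g + c ^ 2 * coulomb g g := by
  have hff := hf.integrable_coulomb hf
  have hfg := (hf.integrable_coulomb hg).const_mul c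
  have hgf := (hg.integrable_coulomb hf).const_mul c
  have hgg := (hg.integrable_coulomb hg).const_mul (c ^ 2)
  have hexpand : coulomb (f + c • g) (f + c • g) =
      coulomb f f + c * coulomb f g + (c * coulomb g f + c ^ 2 * coulomb g g) := by
    simp only [coulomb, ← integral_const_mul]
    rw [← integral_add hff hfg, ← integral_add hgf hgg]
    refine Eq.trans ?_ (integral_add (hff.add hfg) (hgf.add hgg))
    congr with p
    simp only [Pi.add_apply, Pi.smul_apply, smul_eq_mul]
    ring
  rw [hexpand, coulomb_comm g f]
  ring

theorem coulomb_indicator_one {A B : Set E3} (hA : MeasurableSet A) (hB : MeasurableSet B) :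
    coulomb (A.indicator 1) (B.indicator 1) = ∫ p in A ×ˢ B, 1 / ‖p.1 - p.2‖ := by
  rw [coulomb, ← integral_indicator (hA.prod hB)]
  congr with p
  by_cases hx : p.1 ∈ A <;> by_cases hy : p.2 ∈ B <;> simp [indicator, hx, hy]

theorem ofReal_coulomb_indicator_one {A B : Set E3} (hA : MeasurableSet A) (hB : MeasurableSet B)
    (hAb : IsBounded A) (hBb : IsBounded B) :
    ENNReal.ofReal (coulomb (A.indicator 1) (B.indicator 1)) =
      ∫⁻ p in A ×ˢ B, ENNReal.ofReal (1 / ‖p.1 - p.2‖) := by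
  rw [coulomb_indicator_one hA hB]
  exact ofReal_integral_eq_lintegral_ofReal (integrableOn_one_div_norm_sub hAb hBb)
    (.of_forall fun p => by positivity)

theorem coulomb_indicator_one_nonneg {A B : Set E3} (hA : MeasurableSet A)
    (hB : MeasurableSet B) : 0 ≤ coulomb (A.indicator 1) (B.indicator 1) := by
  rw [coulomb_indicator_one hA hB]
  positivity

theorem coulomb_indicator_one_le {A B : Set E3} (hA : MeasurableSet A) (hB : MeasurableSet B)
    (hBb : IsBounded B) (hAB : A ⊆ B) :
    coulomb (A.indicator 1) (B.indicator 1) ≤ 2 * Real.pi * diam B ^ 2 * vol A := by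
  have hAfin : volume A ≠ ∞ := (hBb.subset hAB).measure_lt_top.ne
  rw [← ENNReal.ofReal_le_ofReal_iff (by unfold vol; positivity),
    ofReal_coulomb_indicator_one hA hB (hBb.subset hAB) hBb, ENNReal.ofReal_mul (by positivity),
    vol, ENNReal.ofReal_toReal hAfin]
  exact setLIntegral_prod_one_div_norm_sub_le diam_nonneg fun x hx y hy =>
    dist_le_diam_of_mem hBb hy (hAB hx)

theorem II_nonneg (Ω : Set E3) : 0 ≤ II Ω := by
  have := per_nonneg Ω
  unfold II
  positivity

theorem muStar_mul_vol_le_II {Ω : Set E3} (hΩ : MeasurableSet Ω) (hper : HasFinPer Ω)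
    (hΩfin : volume Ω ≠ ∞) : muStar * vol Ω ≤ II Ω := by
  rcases eq_or_ne (volume Ω) 0 with hzero | hpos
  · simpa [vol, hzero] using II_nonneg Ω
  have hvol : 0 < vol Ω := ENNReal.toReal_pos hpos hΩfin
  rw [← le_div_iff₀ hvol]
  refine csInf_le ⟨0, ?_⟩ ⟨Ω, hΩ, hper, pos_iff_ne_zero.2 hpos, hΩfin.lt_top, rfl⟩
  rintro _ ⟨A, -, -, -, -, rfl⟩
  exact div_nonneg (II_nonneg A) ENNReal.toReal_nonneg

theorem II_eq_per_add_coulomb {Ω : Set E3} (hΩ : MeasurableSet Ω) (hΩb : IsBounded Ω) :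
    II Ω = per Ω + 1 / 2 * coulomb (Ω.indicator 1) (Ω.indicator 1) := by
  rw [II, coulomb_indicator_one hΩ hΩ, Measure.volume_eq_prod,
    setIntegral_prod _ (integrableOn_one_div_norm_sub hΩb hΩb)]

theorem ldEnergy_eq_per_add_coulomb {Λ Ω : Set E3} (ρ : ℝ) (hΛ : MeasurableSet Λ)
    (hΛb : IsBounded Λ) (hΩ : MeasurableSet Ω) (hΩb : IsBounded Ω) :
    ldEnergy Λ ρ Ω = per Ω + 1 / 2 *
      coulomb (Ω.indicator 1 + (-ρ) • Λ.indicator 1) (Ω.indicator 1 + (-ρ) • Λ.indicator 1) := by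
  have hσ := (IsBoundedCharge.indicator_one hΩ hΩb).add_const_smul
    (IsBoundedCharge.indicator_one hΛ hΛb) (-ρ)
  rw [ldEnergy, hσ.coulomb_eq_integral_integral hσ]
  simp only [Pi.add_apply, Pi.smul_apply, smul_eq_mul, neg_mul, ← sub_eq_add_neg]
  rfl

theorem II_le_ldEnergy_add {Λ Ω : Set E3} {ρ : ℝ} (hρ : 0 ≤ ρ) (hΛ : MeasurableSet Λ)
    (hΛb : IsBounded Λ) (hΩ : MeasurableSet Ω) (hΩΛ : Ω ⊆ Λ) :
    II Ω ≤ ldEnergy Λ ρ Ω + ρ * (2 * Real.pi * diam Λ ^ 2 * vol Ω) := by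
  have hΩb := hΛb.subset hΩΛ
  have hbackground := coulomb_indicator_one_nonneg hΛ hΛ
  have hattraction := coulomb_indicator_one_le hΩ hΛ hΛb hΩΛ
  rw [II_eq_per_add_coulomb hΩ hΩb, ldEnergy_eq_per_add_coulomb ρ hΛ hΛb hΩ hΩb,
    coulomb_add_const_smul_self (.indicator_one hΩ hΩb) (.indicator_one hΛ hΛb)]
  linarith [mul_le_mul_of_nonneg_left hattraction hρ, mul_nonneg (sq_nonneg ρ) hbackground]

theorem II_union {A B : Set E3} (hA : MeasurableSet A) (hB : MeasurableSet B)
    (hAb : IsBounded A) (hBb : IsBounded B) (hAB : Disjoint A B) :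
    II (A ∪ B) + (per A + per B) =
      II A + II B + per (A ∪ B) + coulomb (A.indicator 1) (B.indicator 1) := by
  have hindicator : (A ∪ B).indicator (1 : E3 → ℝ) = A.indicator 1 + (1 : ℝ) • B.indicator 1 := by
    rw [one_smul, indicator_union_of_disjoint hAB]
    rfl
  rw [II_eq_per_add_coulomb (hA.union hB) (hAb.union hBb), II_eq_per_add_coulomb hA hAb,
    II_eq_per_add_coulomb hB hBb, hindicator,
    coulomb_add_const_smul_self (.indicator_one hA hAb) (.indicator_one hB hBb)]
  ring

theorem coulomb_le_of_disjoint {A B : Set E3} (hA : MeasurableSet A) (hB : MeasurableSet B)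
    (hAb : IsBounded A) (hBb : IsBounded B) (hAB : Disjoint A B) (hAper : HasFinPer A)
    (hBper : HasFinPer B) :
    coulomb (A.indicator 1) (B.indicator 1) ≤
      per A + per B - per (A ∪ B) + (II (A ∪ B) - muStar * vol (A ∪ B)) := by
  have hvol : vol (A ∪ B) = vol A + vol B :=
    measureReal_union hAB hB hAb.measure_lt_top.ne hBb.measure_lt_top.ne
  have hA_le := muStar_mul_vol_le_II hA hAper hAb.measure_lt_top.ne
  have hB_le := muStar_mul_vol_le_II hB hBper hBb.measure_lt_top.ne
  rw [hvol]
  linarith [II_union hA hB hAb hBb hAB]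

theorem coulomb_levelSet_cut_le {Λ Ω : Set E3} {ρ : ℝ} (hρ : 0 ≤ ρ) (hΛ : MeasurableSet Λ)
    (hΛb : IsBounded Λ) (hΩ : MeasurableSet Ω) (hΩΛ : Ω ⊆ Λ) (hper : HasFinPer Ω)
    (hE : ldEnergy Λ ρ Ω ≤ muStar * vol Ω) {u : E3 → ℝ} (hu : ContDiff ℝ 1 u) {L : ℝ}
    (hL : ∀ x, ‖fderiv ℝ u x‖ ≤ L) {l c : ℝ}
    (hc : HasDerivWithinAt (fun t => vol (Ω ∩ u ⁻¹' Iic t)) c (Ioi l) l) :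
    coulomb ((Ω ∩ u ⁻¹' Ioi l).indicator 1) ((Ω ∩ u ⁻¹' Iic l).indicator 1) ≤
      2 * L * c + ρ * (2 * Real.pi * diam Λ ^ 2 * vol Ω) := by
  have hΩb := hΛb.subset hΩΛ
  obtain ⟨hup, hlow, hcut⟩ := hper.cut_levelSet hΩ hΩb.measure_lt_top.ne hu hL hc
  have hunion : Ω ∩ u ⁻¹' Ioi l ∪ Ω ∩ u ⁻¹' Iic l = Ω := by
    rw [← compl_Ioi, preimage_compl, inter_union_compl]
  have hdisj : Disjoint (Ω ∩ u ⁻¹' Ioi l) (Ω ∩ u ⁻¹' Iic l) :=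
    ((Iic_disjoint_Ioi le_rfl).symm.preimage u).mono inter_subset_right inter_subset_right
  have hsplit := coulomb_le_of_disjoint
    (hΩ.inter (hu.continuous.measurable measurableSet_Ioi))
    (hΩ.inter (hu.continuous.measurable measurableSet_Iic))
    (hΩb.subset inter_subset_left) (hΩb.subset inter_subset_left) hdisj hup hlow
  rw [hunion] at hsplit
  linarith [II_le_ldEnergy_add hρ hΛ hΛb hΩ hΩΛ]

/-! ### Integration over the levels -/

theorem lintegral_ofReal_sub_mul_eq_lintegral {Z : Type*} [MeasurableSpace Z] {m : Measure Z}
    [SFinite m] {f g : Z → ℝ} (hf : Measurable f) (hg : Measurable g) {K : Z → ℝ≥0∞}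
    (hK : Measurable K) :
    ∫⁻ z, ENNReal.ofReal (f z - g z) * K z ∂m =
      ∫⁻ t, ∫⁻ z in {z | t ∈ Ico (g z) (f z)}, K z ∂m := by
  set S : Set (ℝ × Z) := {q | q.1 ∈ Ico (g q.2) (f q.2)}
  have hS : MeasurableSet S :=
    (measurableSet_le (hg.comp measurable_snd) measurable_fst).inter
      (measurableSet_lt measurable_fst (hf.comp measurable_snd))
  have hKS : Measurable (S.indicator fun q => K q.2) := (hK.comp measurable_snd).indicator hS
  calc ∫⁻ z, ENNReal.ofReal (f z - g z) * K z ∂m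
      = ∫⁻ z, (∫⁻ t, S.indicator (fun q => K q.2) (t, z)) ∂m := by
        refine lintegral_congr fun z => ?_
        rw [← Real.volume_Ico, mul_comm, ← lintegral_indicator_const measurableSet_Ico]
        rfl
    _ = ∫⁻ t, ∫⁻ z, S.indicator (fun q => K q.2) (t, z) ∂m :=
        lintegral_lintegral_swap (hKS.comp measurable_swap).aemeasurable
    _ = ∫⁻ t, ∫⁻ z in {z | t ∈ Ico (g z) (f z)}, K z ∂m := by
        refine lintegral_congr fun t => ?_
        exact lintegral_indicator (measurable_prodMk_left hS : MeasurableSet (Prod.mk t ⁻¹' S)) K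

theorem setLIntegral_Icc_le_of_forall_hasDerivAt {F : ℝ → ℝ} (hF : Monotone F) {G : ℝ → ℝ≥0∞}
    {a b : ℝ} (ha : 0 ≤ a) (hb : 0 ≤ b)
    (hG : ∀ t c, HasDerivAt F c t → G t ≤ ENNReal.ofReal (a * c + b)) {α β : ℝ} (hαβ : α ≤ β) :
    ∫⁻ t in Icc α β, G t ≤ ENNReal.ofReal (a * (F β - F α) + b * (β - α)) := by
  have hderiv : IntervalIntegrable (deriv F) volume α β :=
    (hF.monotoneOn _).intervalIntegrable_deriv
  have hsum : IntervalIntegrable (fun t => a * deriv F t + b) volume α β :=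
    (hderiv.const_mul a).add intervalIntegrable_const
  -- Only an inequality, since a monotone function may have jumps or a singular part.
  have hderiv_le : ∫ t in α..β, deriv F t ≤ F β - F α := by
    have hmem := (hF.monotoneOn (uIcc α β)).intervalIntegral_deriv_mem_uIcc
    rw [uIcc_of_le (sub_nonneg.2 (hF hαβ))] at hmem
    exact hmem.2
  calc ∫⁻ t in Icc α β, G t
      ≤ ∫⁻ t in Icc α β, ENNReal.ofReal (a * deriv F t + b) := by
        refine lintegral_mono_ae ?_
        filter_upwards [ae_restrict_of_ae hF.ae_differentiableAt] with t ht
        exact hG t _ ht.hasDerivAt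
    _ = ENNReal.ofReal (∫ t in α..β, (a * deriv F t + b)) := by
        rw [← restrict_Ioc_eq_restrict_Icc, intervalIntegral.integral_of_le hαβ,
          ofReal_integral_eq_lintegral_ofReal
            ((intervalIntegrable_iff_integrableOn_Ioc_of_le hαβ).1 hsum)]
        exact Eventually.of_forall fun t => add_nonneg (mul_nonneg ha hF.deriv_nonneg) hb
    _ ≤ ENNReal.ofReal (a * (F β - F α) + b * (β - α)) := by
        rw [intervalIntegral.integral_add (hderiv.const_mul a) intervalIntegrable_const,
          intervalIntegral.integral_const_mul, intervalIntegral.integral_const, smul_eq_mul,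
          mul_comm b]
        gcongr

theorem setLIntegral_ofReal_sub_div_norm_sub_eq {Ω : Set E3} (hΩ : MeasurableSet Ω)
    (hΩb : IsBounded Ω) {u : E3 → ℝ} (hu : Measurable u) :
    ∫⁻ p in Ω ×ˢ Ω, ENNReal.ofReal (u p.1 - u p.2) * ENNReal.ofReal (1 / ‖p.1 - p.2‖) =
      ∫⁻ t, ENNReal.ofReal
        (coulomb ((Ω ∩ u ⁻¹' Ioi t).indicator 1) ((Ω ∩ u ⁻¹' Iic t).indicator 1)) := by
  have hu₁ : Measurable fun p : E3 × E3 => u p.1 := hu.comp measurable_fst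
  have hu₂ : Measurable fun p : E3 × E3 => u p.2 := hu.comp measurable_snd
  rw [lintegral_ofReal_sub_mul_eq_lintegral hu₁ hu₂ (by fun_prop)]
  refine lintegral_congr fun t => ?_
  have ht : MeasurableSet {p : E3 × E3 | t ∈ Ico (u p.2) (u p.1)} :=
    (measurableSet_le hu₂ measurable_const).inter (measurableSet_lt measurable_const hu₁)
  rw [Measure.restrict_restrict ht, ofReal_coulomb_indicator_one (hΩ.inter (hu measurableSet_Ioi))
      (hΩ.inter (hu measurableSet_Iic)) (hΩb.subset inter_subset_left)
      (hΩb.subset inter_subset_left)]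
  congr 2
  ext ⟨x, y⟩
  simp only [mem_inter_iff, mem_ofPred_eq, mem_Ico, mem_prod, mem_preimage, mem_Ioi, mem_Iic]
  tauto

theorem coulomb_levelSet_eq_zero {Ω : Set E3} {u : E3 → ℝ} {α β t : ℝ} (hu : MapsTo u Ω (Icc α β))
    (ht : t ∉ Icc α β) :
    coulomb ((Ω ∩ u ⁻¹' Ioi t).indicator 1) ((Ω ∩ u ⁻¹' Iic t).indicator 1) = 0 := by
  rcases not_and_or.1 ht with hα | hβ
  · have hlow : Ω ∩ u ⁻¹' Iic t = ∅ :=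
      eq_empty_of_forall_notMem fun x hx => hα ((hu hx.1).1.trans hx.2)
    simp [coulomb, hlow]
  · have hup : Ω ∩ u ⁻¹' Ioi t = ∅ :=
      eq_empty_of_forall_notMem fun x hx => hβ (hx.2.le.trans (hu hx.1).2)
    simp [coulomb, hup]

theorem monotone_vol_inter_sublevel {Ω : Set E3} (hΩ : volume Ω ≠ ∞) (u : E3 → ℝ) :
    Monotone fun t => vol (Ω ∩ u ⁻¹' Iic t) := fun _ _ hst =>
  measureReal_mono (inter_subset_inter_right Ω (preimage_mono (Iic_subset_Iic.2 hst)))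
    (measure_ne_top_of_subset inter_subset_left hΩ)

theorem setLIntegral_ofReal_sub_div_norm_sub_le {Λ Ω : Set E3} {ρ : ℝ} (hρ : 0 ≤ ρ)
    (hΛ : MeasurableSet Λ) (hΛb : IsBounded Λ) (hΩ : MeasurableSet Ω) (hΩΛ : Ω ⊆ Λ)
    (hper : HasFinPer Ω) (hE : ldEnergy Λ ρ Ω ≤ muStar * vol Ω) {u : E3 → ℝ}
    (hu : ContDiff ℝ 1 u) {L : ℝ} (hL : ∀ x, ‖fderiv ℝ u x‖ ≤ L) :
    ∫⁻ p in Ω ×ˢ Ω, ENNReal.ofReal (u p.1 - u p.2) * ENNReal.ofReal (1 / ‖p.1 - p.2‖) ≤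
      ENNReal.ofReal (L * ((2 + 2 * Real.pi * ρ * diam Λ ^ 3) * vol Ω)) := by
  have hΩb := hΛb.subset hΩΛ
  have hL₀ : 0 ≤ L := (norm_nonneg _).trans (hL 0)
  have hv : 0 ≤ vol Ω := ENNReal.toReal_nonneg
  have hlip : LipschitzWith ⟨L, hL₀⟩ u :=
    lipschitzWith_of_nnnorm_fderiv_le (hu.differentiable one_ne_zero) hL
  have himage : IsBounded (u '' Ω) := hlip.isBounded_image hΩb
  set α := sInf (u '' Ω)
  set β := sSup (u '' Ω)
  have hwidth : β - α ≤ L * diam Λ := by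
    rw [← Real.diam_eq himage]
    exact (hlip.diam_image_le Ω hΩb).trans
      (mul_le_mul_of_nonneg_left (diam_mono hΩΛ hΛb) hL₀)
  set F : ℝ → ℝ := fun t => vol (Ω ∩ u ⁻¹' Iic t)
  have hrange : F β - F α ≤ vol Ω := (sub_le_self _ ENNReal.toReal_nonneg).trans
    (measureReal_mono inter_subset_left hΩb.measure_lt_top.ne)
  set C : ℝ → ℝ := fun t =>
    coulomb ((Ω ∩ u ⁻¹' Ioi t).indicator 1) ((Ω ∩ u ⁻¹' Iic t).indicator 1)
  calc ∫⁻ p in Ω ×ˢ Ω, ENNReal.ofReal (u p.1 - u p.2) * ENNReal.ofReal (1 / ‖p.1 - p.2‖)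
      = ∫⁻ t, ENNReal.ofReal (C t) :=
        setLIntegral_ofReal_sub_div_norm_sub_eq hΩ hΩb hu.continuous.measurable
    _ = ∫⁻ t in Icc α β, ENNReal.ofReal (C t) := by
        rw [← lintegral_indicator measurableSet_Icc, indicator_eq_self.2]
        refine Function.support_subset_iff'.2 fun t ht => ?_
        have hzero : C t = 0 :=
          coulomb_levelSet_eq_zero (mapsTo_iff_image_subset.2 himage.subset_Icc_sInf_sSup) ht
        rw [hzero, ENNReal.ofReal_zero]
    _ ≤ ENNReal.ofReal (2 * L * (F β - F α) +
          ρ * (2 * Real.pi * diam Λ ^ 2 * vol Ω) * (β - α)) := by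
        refine setLIntegral_Icc_le_of_forall_hasDerivAt
          (monotone_vol_inter_sublevel hΩb.measure_lt_top.ne u) (by positivity) (by positivity)
          (fun t c hc => ENNReal.ofReal_le_ofReal ?_)
          (Real.sInf_le_sSup _ himage.bddBelow himage.bddAbove)
        exact coulomb_levelSet_cut_le hρ hΛ hΛb hΩ hΩΛ hper hE hu hL hc.hasDerivWithinAt
    _ ≤ ENNReal.ofReal (2 * L * vol Ω +
          ρ * (2 * Real.pi * diam Λ ^ 2 * vol Ω) * (L * diam Λ)) := by gcongr
    _ = ENNReal.ofReal (L * ((2 + 2 * Real.pi * ρ * diam Λ ^ 3) * vol Ω)) := by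
        congr 1
        ring

/-! ### Averaging over directions -/

theorem integral_max_mul_exp_neg_sq : ∫ t : ℝ, max t 0 * Real.exp (-t ^ 2) = 1 / 2 := by
  have hindicator : (fun t : ℝ => max t 0 * Real.exp (-t ^ 2)) =
      (Ioi 0).indicator fun t => t * Real.exp (-t ^ 2) := by
    ext t
    rcases le_or_gt t 0 with ht | ht
    · simp [ht]
    · simp [ht, ht.le]
  have hweight : ∀ t ∈ Ioi (0 : ℝ), t * Real.exp (-t ^ 2) =
      t ^ (1 : ℝ) * Real.exp (-t ^ (2 : ℝ)) := fun t _ => by norm_cast; simp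
  rw [hindicator, integral_indicator measurableSet_Ioi,
    setIntegral_congr_fun measurableSet_Ioi hweight,
    integral_rpow_mul_exp_neg_rpow two_pos (by norm_num)]
  norm_num

section Gaussian

variable {ι : Type*} [Fintype ι]

theorem max_inner_single_mul_exp_neg_norm_sq [DecidableEq ι] (i : ι) {r : ℝ} (hr : 0 ≤ r)
    (ν : EuclideanSpace ℝ ι) :
    max ⟪ν, EuclideanSpace.single i r⟫ 0 * Real.exp (-‖ν‖ ^ 2) =
      r * ∏ j, ((if j = i then max (ν j) 0 else 1) * Real.exp (-(ν j) ^ 2)) := by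
  have hinner : max ⟪ν, EuclideanSpace.single i r⟫ 0 = r * max (ν i) 0 := by
    rw [EuclideanSpace.inner_single_right, mul_max_of_nonneg _ _ hr, mul_zero, conj_trivial]
  rw [hinner, EuclideanSpace.norm_sq_eq, Finset.prod_mul_distrib, ← Real.exp_sum,
    Finset.prod_ite_eq' Finset.univ i, if_pos (Finset.mem_univ i), Finset.sum_neg_distrib]
  simp [mul_assoc]

theorem lintegral_inner_single_mul_exp_neg_norm_sq [DecidableEq ι] (i : ι) {r : ℝ}
    (hr : 0 ≤ r) :
    ∫⁻ ν : EuclideanSpace ℝ ι,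
        ENNReal.ofReal (⟪ν, EuclideanSpace.single i r⟫ * Real.exp (-‖ν‖ ^ 2)) =
      ENNReal.ofReal (√Real.pi ^ (Fintype.card ι - 1) / 2 * r) := by
  set g : ι → ℝ → ℝ := fun j t => (if j = i then max t 0 else 1) * Real.exp (-t ^ 2)
  have hgaussian : ∫ t : ℝ, Real.exp (-t ^ 2) = √Real.pi := by simpa using integral_gaussian 1
  have hg : ∀ j, ∫ t, g j t = if j = i then 1 / 2 else √Real.pi := fun j => by
    by_cases hj : j = i
    · simpa [g, hj] using integral_max_mul_exp_neg_sq
    · simpa [g, hj] using hgaussian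
  have hg_int : ∀ j, Integrable (g j) := fun j => .of_integral_ne_zero (by
    rw [hg]
    split_ifs <;> positivity)
  have hprod : ∏ j, ∫ t, g j t = 1 / 2 * √Real.pi ^ (Fintype.card ι - 1) := by
    simp_rw [hg]
    rw [Fintype.prod_eq_mul_prod_compl i, if_pos rfl,
      Finset.prod_congr rfl fun j hj => if_neg (by simpa using hj), Finset.prod_const,
      Finset.card_compl, Finset.card_singleton]
  have hpos : ∀ ν : EuclideanSpace ℝ ι,
      ENNReal.ofReal (⟪ν, EuclideanSpace.single i r⟫ * Real.exp (-‖ν‖ ^ 2)) =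
        ENNReal.ofReal (r * ∏ j, g j (ν j)) := fun ν => by
    rw [← max_inner_single_mul_exp_neg_norm_sq i hr, max_mul_of_nonneg _ _ (by positivity),
      zero_mul, ENNReal.ofReal_max]
    simp
  have hmp := EuclideanSpace.volume_preserving_symm_measurableEquiv_toLp ι
  calc _ = ∫⁻ x : ι → ℝ, ENNReal.ofReal (r * ∏ j, g j (x j)) := by
        simp_rw [hpos]
        exact hmp.lintegral_comp_emb (MeasurableEquiv.measurableEmbedding _)
          fun x : ι → ℝ => ENNReal.ofReal (r * ∏ j, g j (x j))
    _ = ENNReal.ofReal (∫ x : ι → ℝ, r * ∏ j, g j (x j)) := by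
        refine (ofReal_integral_eq_lintegral_ofReal
          ((Integrable.fintype_prod hg_int).const_mul r) (.of_forall fun x => ?_)).symm
        refine mul_nonneg hr (Finset.prod_nonneg fun j _ => ?_)
        simp only [g]
        split_ifs <;> positivity
    _ = _ := by
        rw [integral_const_mul, integral_fintype_prod_volume_eq_prod, hprod]
        ring_nf

theorem lintegral_inner_mul_exp_neg_norm_sq [Nonempty ι] (v : EuclideanSpace ℝ ι) :
    ∫⁻ ν : EuclideanSpace ℝ ι, ENNReal.ofReal (⟪ν, v⟫ * Real.exp (-‖ν‖ ^ 2)) =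
      ENNReal.ofReal (√Real.pi ^ (Fintype.card ι - 1) / 2 * ‖v‖) := by
  classical
  let w : EuclideanSpace ℝ ι := EuclideanSpace.single (Classical.arbitrary ι) ‖v‖
  have hnorm : ‖v‖ = ‖w‖ := by simp [w]
  let R := (ℝ ∙ (v - w))ᗮ.reflection
  have hRv : R v = w := Submodule.reflection_sub hnorm
  rw [← lintegral_inner_single_mul_exp_neg_norm_sq (Classical.arbitrary ι) (norm_nonneg v),
    ← R.measurePreserving.lintegral_comp_emb R.toHomeomorph.measurableEmbedding fun ν =>
      ENNReal.ofReal (⟪ν, w⟫ * Real.exp (-‖ν‖ ^ 2))]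
  simp_rw [← hRv, R.inner_map_map, R.norm_map]

end Gaussian

theorem ae_fst_ne_snd {E : Type*} [MeasurableSpace E] [MeasurableEq E] {μ ν : Measure E}
    [SFinite ν] [NullSingletonClass ν] : ∀ᵐ p ∂μ.prod ν, p.1 ≠ p.2 :=
  (Measure.ae_prod_iff_ae_ae measurableSet_diagonal.compl).2
    (.of_forall fun x => (ν.ae_ne x).mono fun _ => Ne.symm)

theorem lintegral_setLIntegral_inner_div_norm_sub (Ω : Set E3) :
    ∫⁻ ν : E3, ENNReal.ofReal (Real.exp (-‖ν‖ ^ 2)) * ∫⁻ p in Ω ×ˢ Ω,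
        ENNReal.ofReal ⟪ν, p.1 - p.2⟫ * ENNReal.ofReal (1 / ‖p.1 - p.2‖) =
      ENNReal.ofReal (Real.pi / 2) * volume Ω ^ 2 := by
  have hdirection : ∀ p : E3 × E3, p.1 ≠ p.2 → ∫⁻ ν : E3, ENNReal.ofReal (Real.exp (-‖ν‖ ^ 2)) *
      (ENNReal.ofReal ⟪ν, p.1 - p.2⟫ * ENNReal.ofReal (1 / ‖p.1 - p.2‖)) =
        ENNReal.ofReal (Real.pi / 2) := fun p hp => by
    have hnorm : ‖p.1 - p.2‖ ≠ 0 := norm_ne_zero_iff.2 (sub_ne_zero.2 hp)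
    have hgauss := lintegral_inner_mul_exp_neg_norm_sq (p.1 - p.2)
    rw [Fintype.card_fin, Real.sq_sqrt Real.pi_pos.le] at hgauss
    simp_rw [← mul_assoc, ← ENNReal.ofReal_mul (Real.exp_pos _).le]
    rw [lintegral_mul_const _ (by fun_prop)]
    simp_rw [mul_comm (Real.exp _)]
    rw [hgauss, ← ENNReal.ofReal_mul (by positivity), mul_assoc, mul_one_div_cancel hnorm,
      mul_one]
  calc ∫⁻ ν : E3, ENNReal.ofReal (Real.exp (-‖ν‖ ^ 2)) * ∫⁻ p in Ω ×ˢ Ω,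
        ENNReal.ofReal ⟪ν, p.1 - p.2⟫ * ENNReal.ofReal (1 / ‖p.1 - p.2‖)
      = ∫⁻ ν : E3, ∫⁻ p in Ω ×ˢ Ω, ENNReal.ofReal (Real.exp (-‖ν‖ ^ 2)) *
          (ENNReal.ofReal ⟪ν, p.1 - p.2⟫ * ENNReal.ofReal (1 / ‖p.1 - p.2‖)) :=
        lintegral_congr fun ν => (lintegral_const_mul' _ _ ENNReal.ofReal_ne_top).symm
    _ = ∫⁻ p in Ω ×ˢ Ω, ∫⁻ ν : E3, ENNReal.ofReal (Real.exp (-‖ν‖ ^ 2)) *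
          (ENNReal.ofReal ⟪ν, p.1 - p.2⟫ * ENNReal.ofReal (1 / ‖p.1 - p.2‖)) :=
        lintegral_lintegral_swap (by fun_prop)
    _ = ∫⁻ p in Ω ×ˢ Ω, ENNReal.ofReal (Real.pi / 2) :=
        lintegral_congr_ae ((ae_restrict_of_ae ae_fst_ne_snd).mono hdirection)
    _ = ENNReal.ofReal (Real.pi / 2) * volume Ω ^ 2 := by
        rw [setLIntegral_const, Measure.volume_eq_prod, Measure.prod_prod, sq]

theorem sq_vol_le_of_forall_setLIntegral_inner_le {Ω : Set E3} (hΩ : volume Ω ≠ ∞) {M : ℝ}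
    (hM : 0 ≤ M) (h : ∀ ν : E3, ∫⁻ p in Ω ×ˢ Ω,
      ENNReal.ofReal ⟪ν, p.1 - p.2⟫ * ENNReal.ofReal (1 / ‖p.1 - p.2‖) ≤
        ENNReal.ofReal (‖ν‖ * M)) :
    vol Ω ^ 2 ≤ 4 * M := by
  have hle : ENNReal.ofReal (Real.pi / 2 * vol Ω ^ 2) ≤ ENNReal.ofReal (2 * Real.pi * M) :=
    calc ENNReal.ofReal (Real.pi / 2 * vol Ω ^ 2)
        = ENNReal.ofReal (Real.pi / 2) * volume Ω ^ 2 := by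
          rw [ENNReal.ofReal_mul (by positivity), vol, ENNReal.ofReal_pow ENNReal.toReal_nonneg,
            ENNReal.ofReal_toReal hΩ]
      _ ≤ ∫⁻ ν : E3, ENNReal.ofReal (Real.exp (-‖ν‖ ^ 2)) * ENNReal.ofReal (‖ν‖ * M) := by
          rw [← lintegral_setLIntegral_inner_div_norm_sub]
          gcongr with ν
          exact h ν
      _ = ∫⁻ ν : E3, ENNReal.ofReal (‖ν‖ * Real.exp (-‖ν‖ ^ 2)) * ENNReal.ofReal M := by
          refine lintegral_congr fun ν => ?_
          rw [← ENNReal.ofReal_mul (by positivity), ← ENNReal.ofReal_mul (by positivity)]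
          ring_nf
      _ = ENNReal.ofReal (2 * Real.pi * M) := by
          rw [lintegral_mul_const _ (by fun_prop), E3.lintegral_norm_mul_exp_neg_norm_sq,
            ← ENNReal.ofReal_mul (by positivity)]
  rw [ENNReal.ofReal_le_ofReal_iff (by positivity)] at hle
  nlinarith [Real.pi_pos]

theorem mass_bound_general {ρ : ℝ} (hρ : 0 ≤ ρ) {Λ Ω : Set E3} (hΛ : MeasurableSet Λ)
    (hΛb : IsBounded Λ) (hΩ : MeasurableSet Ω) (hΩΛ : Ω ⊆ Λ) (hper : HasFinPer Ω)
    (hE : ldEnergy Λ ρ Ω ≤ muStar * vol Ω) :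
    vol Ω ≤ 8 + 8 * Real.pi * ρ * diam Λ ^ 3 := by
  have hv : 0 ≤ vol Ω := ENNReal.toReal_nonneg
  have hdirection (ν : E3) : ∫⁻ p in Ω ×ˢ Ω,
      ENNReal.ofReal ⟪ν, p.1 - p.2⟫ * ENNReal.ofReal (1 / ‖p.1 - p.2‖) ≤
        ENNReal.ofReal (‖ν‖ * ((2 + 2 * Real.pi * ρ * diam Λ ^ 3) * vol Ω)) := by
    simp only [inner_sub_right]
    refine setLIntegral_ofReal_sub_div_norm_sub_le hρ hΛ hΛb hΩ hΩΛ hper hE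
      (innerSL ℝ ν).contDiff fun x => ?_
    rw [ContinuousLinearMap.fderiv, innerSL_apply_norm]
  have hsq := sq_vol_le_of_forall_setLIntegral_inner_le (hΛb.subset hΩΛ).measure_lt_top.ne
    (by positivity) hdirection
  have hbound : 0 ≤ 8 + 8 * Real.pi * ρ * diam Λ ^ 3 := by positivity
  nlinarith

/-- **Estimate on the mass**: if `Ω ⊆ Λ` satisfies `𝓔_Λ[ρ,Ω] ≤ μ*|Ω|`, then
`|Ω| ≤ 8 + 16π ρ diam(Λ)³`. -/
theorem mass_bound (ρ : ℝ) (hρ : 0 ≤ ρ) (Λ : Set E3) (hΛo : IsOpen Λ) (hΛb : IsBounded Λ)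
    (Ω : Set E3) (hΩm : MeasurableSet Ω) (hΩΛ : Ω ⊆ Λ) (hΩper : HasFinPer Ω)
    (hΩpos : 0 < volume Ω) (hE : ldEnergy Λ ρ Ω ≤ muStar * vol Ω) :
    vol Ω ≤ 8 + 16 * Real.pi * ρ * (Metric.diam Λ)^3 :=
  (mass_bound_general hρ hΛo.measurableSet hΛb hΩm hΩΛ hΩper hE).trans (by gcongr; norm_num)

end
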